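/- arXiv:2203.06005 — 3 statements merged into one kernel-verified Lean document; each statement's English description precedes it below -/
import Mathlib

section
/- Let R be a right semiartinian ring with right socle sequence (S_α | α ≤ σ+1), and let M be a right R-module. Then the following are equivalent: (1) M is weakly R-projective; (2) for each α ≤ σ, each submodule K with S_α ⊆ K ⊆ S_{α+1}, and each homomorphism f : M → S_{α+1}/K with finitely generated image, there exists g : M → S_{α+1} such that f = π_K ∘ g, where π_K : S_{α+1} → S_{α+1}/K is the canonical projection. -/
universe u

open Submodule Function

/-- The socle of a module: the supremum of all simple submodules. -/
def moduleSocle (R : Type*) (M : Type*) [Ring R] [AddCommGroup M] [Module R M] :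
    Submodule R M :=
  sSup {W : Submodule R M | IsSimpleModule R ↥W}

/-- A ring is right semiartinian if every nonzero quotient of the right module `R_R`
has a nonzero socle. -/
def IsRightSemiartinian (R : Type u) [Ring R] : Prop :=
  ∀ I : Submodule Rᵐᵒᵖ R, I ≠ ⊤ → moduleSocle Rᵐᵒᵖ (R ⧸ I) ≠ ⊥

/-- The right socle sequence of a ring: `S_0 = 0`, `S_{α+1}/S_α = Soc(R/S_α)`,
and unions at limits. -/
noncomputable def socleSeq (R : Type u) [Ring R] : Ordinal.{u} → Submodule Rᵐᵒᵖ R :=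
  fun o => Ordinal.limitRecOn o ⊥
    (fun _ S => Submodule.comap S.mkQ (moduleSocle Rᵐᵒᵖ (R ⧸ S)))
    (fun o _ ih => ⨆ (β : Ordinal.{u}) (h : β < o), ih β h)

/-- `S_α`, viewed as a submodule of `S_{α+1}`; the kernel of the `α`-th layer
epimorphism `π_α : S_{α+1} → S_{α+1}/S_α`. -/
noncomputable def layerKer (R : Type u) [Ring R] (α : Ordinal.{u}) :
    Submodule Rᵐᵒᵖ ↥(socleSeq R (α + 1)) :=
  (socleSeq R α).comap (socleSeq R (α + 1)).subtype

/-- The `α`-th layer `L_α = S_{α+1}/S_α` of a ring. -/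
noncomputable abbrev Layer (R : Type u) [Ring R] (α : Ordinal.{u}) :=
  ↥(socleSeq R (α + 1)) ⧸ layerKer R α

/-- A module `M` is weakly `R`-projective if for each `0 < α ≤ σ`, every homomorphism
`f : M → L_α` with finitely generated image factors through the `α`-th layer
epimorphism `π_α : S_{α+1} → L_α`. -/
def WeaklyRProjective (R : Type u) [Ring R] (σ : Ordinal.{u})
    (M : Type u) [AddCommGroup M] [Module Rᵐᵒᵖ M] : Prop :=
  ∀ α : Ordinal.{u}, 0 < α → α ≤ σ →
    ∀ f : M →ₗ[Rᵐᵒᵖ] Layer R α, (LinearMap.range f).FG →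
      ∃ g : M →ₗ[Rᵐᵒᵖ] ↥(socleSeq R (α + 1)), (layerKer R α).mkQ ∘ₗ g = f

/-- A ring is von Neumann regular if each `r` admits `s` with `r * s * r = r`. -/
def IsVNRegular (R : Type u) [Ring R] : Prop :=
  ∀ r : R, ∃ s : R, r * s * r = r

/-- The annihilator of a right `R`-module, as a submodule of the right module `R_R`. -/
def rightAnnihilator (R : Type u) [Ring R] (M : Type u) [AddCommGroup M]
    [Module Rᵐᵒᵖ M] : Submodule Rᵐᵒᵖ R where
  carrier := {r : R | ∀ m : M, MulOpposite.op r • m = 0}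
  add_mem' := by
    intro a b ha hb m
    rw [MulOpposite.op_add, add_smul, ha m, hb m, add_zero]
  zero_mem' := by
    intro m
    rw [MulOpposite.op_zero, zero_smul]
  smul_mem' := by
    intro c r hr m
    have h : MulOpposite.op (c • r) = c * MulOpposite.op r := by
      rw [MulOpposite.smul_eq_mul_unop, MulOpposite.op_mul, MulOpposite.op_unop]
    rw [h, mul_smul, hr m, smul_zero]

/-- A ring has (right) primitive factors artinian if, for each right primitive
(two-sided) ideal `P`, i.e. the annihilator of a simple right module, the factor
`R/P` is (right) artinian. -/
def HasPFA (R : Type u) [Ring R] : Prop :=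
  ∀ (M : Type u) [AddCommGroup M] [Module Rᵐᵒᵖ M], IsSimpleModule Rᵐᵒᵖ M →
    IsArtinian Rᵐᵒᵖ (R ⧸ rightAnnihilator R M)

theorem moduleSocle_isSemisimple (R : Type*) (M : Type*) [Ring R] [AddCommGroup M] [Module R M] :
    IsSemisimpleModule R ↥(moduleSocle R M) := by
  unfold moduleSocle
  rw [sSup_eq_iSup]
  refine isSemisimpleModule_biSup_of_isSemisimpleModule_submodule fun W hW => ?_
  have : IsSimpleModule R W := hW
  infer_instance

theorem socleSeq_add_one (R : Type u) [Ring R] (α : Ordinal.{u}) :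
    socleSeq R (α + 1) =
      Submodule.comap (socleSeq R α).mkQ (moduleSocle Rᵐᵒᵖ (R ⧸ socleSeq R α)) := by
  unfold socleSeq
  rw [Ordinal.limitRecOn_add_one]

theorem socleSeq_zero (R : Type u) [Ring R] : socleSeq R 0 = ⊥ := by
  unfold socleSeq
  rw [Ordinal.limitRecOn_zero]

theorem layer_isSemisimple (R : Type u) [Ring R] (α : Ordinal.{u}) :
    IsSemisimpleModule Rᵐᵒᵖ (Layer R α) := by
  have := moduleSocle_isSemisimple Rᵐᵒᵖ (R ⧸ socleSeq R α)
  let φ : ↥(socleSeq R (α + 1)) →ₗ[Rᵐᵒᵖ] ↥(moduleSocle Rᵐᵒᵖ (R ⧸ socleSeq R α)) :=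
    LinearMap.codRestrict _ ((socleSeq R α).mkQ ∘ₗ (socleSeq R (α + 1)).subtype) (by
      intro x
      exact (socleSeq_add_one R α).le x.2)
  have hker : LinearMap.ker φ = layerKer R α := by
    rw [LinearMap.ker_codRestrict, LinearMap.ker_comp, Submodule.ker_mkQ]
    rfl
  exact IsSemisimpleModule.of_injective ((layerKer R α).liftQ φ hker.ge)
    (LinearMap.ker_eq_bot.mp (Submodule.ker_liftQ_eq_bot _ _ _ hker.le))

/-- Lemma 4 of the paper: over a right semiartinian ring,
weak `R`-projectivity is equivalent to its stronger form involving all intermediate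
submodules `S_α ⊆ K ⊆ S_{α+1}`. -/
theorem weaklyRProjective_iff_strong (R : Type u) [Ring R]
    (hsa : IsRightSemiartinian R)
    (σ : Ordinal.{u}) (hσ : IsLeast {o : Ordinal.{u} | socleSeq R o = ⊤} (σ + 1))
    (M : Type u) [AddCommGroup M] [Module Rᵐᵒᵖ M] :
    WeaklyRProjective R σ M ↔
      ∀ α : Ordinal.{u}, α ≤ σ →
        ∀ K : Submodule Rᵐᵒᵖ ↥(socleSeq R (α + 1)), layerKer R α ≤ K →
          ∀ f : M →ₗ[Rᵐᵒᵖ] (↥(socleSeq R (α + 1)) ⧸ K), (LinearMap.range f).FG →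
            ∃ g : M →ₗ[Rᵐᵒᵖ] ↥(socleSeq R (α + 1)), K.mkQ ∘ₗ g = f := by
  constructor
  · intro hM α hα K hK f hf
    have := layer_isSemisimple R α
    have hfac : Submodule.factor hK ∘ₗ (layerKer R α).mkQ = K.mkQ := by
      ext x; rfl
    obtain ⟨s, hs⟩ := IsSemisimpleModule.lifting_property (Submodule.factor hK)
      (Submodule.factor_surjective hK) LinearMap.id
    have key : ∃ g : M →ₗ[Rᵐᵒᵖ] ↥(socleSeq R (α + 1)), (layerKer R α).mkQ ∘ₗ g = s ∘ₗ f := by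
      rcases eq_or_ne α 0 with h0 | h0
      · have hbot : layerKer R α = ⊥ := by
          subst h0
          unfold layerKer
          rw [socleSeq_zero]
          exact LinearMap.ker_eq_bot.mpr (Submodule.subtype_injective _)
        let e := (layerKer R α).quotEquivOfEqBot hbot
        refine ⟨e.toLinearMap ∘ₗ s ∘ₗ f, ?_⟩
        ext x
        exact e.symm_apply_apply (s (f x))
      · refine hM α (pos_iff_ne_zero.mpr h0) hα (s ∘ₗ f) ?_
        rw [LinearMap.range_comp]
        exact hf.map s
    obtain ⟨g, hg⟩ := key
    refine ⟨g, ?_⟩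
    rw [← hfac, LinearMap.comp_assoc, hg, ← LinearMap.comp_assoc, hs, LinearMap.id_comp]
  · intro h α _ hα f hf
    exact h α hα _ le_rfl f hf
end

section
/- Let R be a right semiartinian ring and M a finitely generated weakly R-projective right R-module. Then M is projective. -/
universe u

open Submodule Function

/-- `M` is projective relative to `P`. -/
def RelProj (A : Type u) [Ring A] (M P : Type u) [AddCommGroup M] [Module A M]
    [AddCommGroup P] [Module A P] : Prop :=
  ∀ (N : Type u) [AddCommGroup N] [Module A N] (φ : P →ₗ[A] N) (f : M →ₗ[A] N),
    LinearMap.range f ≤ LinearMap.range φ → ∃ g : M →ₗ[A] P, φ ∘ₗ g = f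

section Rel

variable {A : Type u} [Ring A] {M P Q : Type u} [AddCommGroup M] [Module A M]
    [AddCommGroup P] [Module A P] [AddCommGroup Q] [Module A Q]

theorem RelProj.congr (e : P ≃ₗ[A] Q) (h : RelProj A M P) : RelProj A M Q := by
  intro N _ _ φ f hf
  obtain ⟨g, hg⟩ := h N (φ ∘ₗ e.toLinearMap) f (by
    rintro _ ⟨m, rfl⟩
    obtain ⟨q, hq⟩ := hf ⟨m, rfl⟩
    exact ⟨e.symm q, by simpa using hq⟩)
  exact ⟨e.toLinearMap ∘ₗ g, by rw [← hg]; rfl⟩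

theorem RelProj.prod (h : RelProj A M P) (h' : RelProj A M Q) : RelProj A M (P × Q) := by
  intro N _ _ φ f hf
  let K : Submodule A N := LinearMap.range (φ ∘ₗ LinearMap.inr A P Q)
  have split : ∀ p q, φ (p, q) = φ (p, 0) + φ (0, q) := fun p q => by
    rw [← map_add]; simp
  obtain ⟨g, hg⟩ := h (N ⧸ K) (K.mkQ ∘ₗ φ ∘ₗ LinearMap.inl A P Q) (K.mkQ ∘ₗ f) (by
    rintro _ ⟨m, rfl⟩
    obtain ⟨⟨p, q⟩, hq⟩ := hf ⟨m, rfl⟩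
    refine ⟨p, ?_⟩
    simp only [LinearMap.comp_apply, Submodule.mkQ_apply, LinearMap.inl_apply]
    rw [← hq, eq_comm, Submodule.Quotient.eq, split]
    exact ⟨q, by simp⟩)
  obtain ⟨g', hg'⟩ := h' N (φ ∘ₗ LinearMap.inr A P Q) (f - φ ∘ₗ LinearMap.inl A P Q ∘ₗ g) (by
    rintro _ ⟨m, rfl⟩
    have := LinearMap.congr_fun hg m
    simp only [LinearMap.comp_apply, Submodule.mkQ_apply] at this
    rw [eq_comm, Submodule.Quotient.eq] at this
    exact this)
  refine ⟨LinearMap.prod g g', ?_⟩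
  ext m
  have := LinearMap.congr_fun hg' m
  simp only [LinearMap.comp_apply, LinearMap.inr_apply, LinearMap.sub_apply,
    LinearMap.inl_apply] at this
  change φ (g m, g' m) = f m
  rw [split, this]
  abel

theorem RelProj.pi (h : RelProj A M P) (n : ℕ) : RelProj A M (Fin n → P) := by
  induction n with
  | zero =>
    intro N _ _ φ f hf
    refine ⟨0, ?_⟩
    ext m
    obtain ⟨q, hq⟩ := hf ⟨m, rfl⟩
    rw [← hq, Subsingleton.elim q 0, LinearMap.comp_zero, map_zero, LinearMap.zero_apply]
  | succ n ih => exact (h.prod ih).congr (Fin.consLinearEquiv A (fun _ => P))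

theorem RelProj.projective [Module.Finite A M] (h : RelProj A M A) : Module.Projective A M := by
  obtain ⟨n, φ, hφ⟩ := Module.Finite.exists_fin' A M
  obtain ⟨g, hg⟩ := h.pi n M φ LinearMap.id (by rw [LinearMap.range_eq_top.2 hφ]; exact le_top)
  exact Module.Projective.of_split g φ hg

end Rel

theorem socleSeq_succ (R : Type u) [Ring R] (β : Ordinal.{u}) : socleSeq R (β + 1) =
    Submodule.comap (socleSeq R β).mkQ (moduleSocle Rᵐᵒᵖ (R ⧸ socleSeq R β)) := by
  unfold socleSeq
  rw [Ordinal.limitRecOn_add_one]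

theorem socleSeq_limit (R : Type u) [Ring R] (o : Ordinal.{u}) (ho : Order.IsSuccLimit o) :
    socleSeq R o = ⨆ (β : Ordinal.{u}) (_ : β < o), socleSeq R β := by
  unfold socleSeq
  rw [Ordinal.limitRecOn_limit _ _ _ _ ho]

theorem socleSeq_mono (R : Type u) [Ring R] (α : Ordinal.{u}) :
    ∀ β ≤ α, socleSeq R β ≤ socleSeq R α := by
  induction α using Ordinal.limitRecOn with
  | zero =>
    intro β hβ
    rw [nonpos_iff_eq_zero.1 hβ]
  | add_one γ ih =>
    intro β hβ
    rcases hβ.lt_or_eq with h | rfl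
    · refine (ih β (Order.lt_add_one_iff.1 h)).trans ?_
      rw [socleSeq_succ]
      intro x hx
      rw [Submodule.mem_comap, Submodule.mkQ_apply, (Submodule.Quotient.mk_eq_zero _).2 hx]
      exact zero_mem _
    · exact le_rfl
  | limit o ho ih =>
    intro β hβ
    rcases hβ.lt_or_eq with h | rfl
    · rw [socleSeq_limit R o ho]
      exact le_iSup₂_of_le β h le_rfl
    · exact le_rfl

theorem moduleSocle_semisimple (A M : Type u) [Ring A] [AddCommGroup M] [Module A M] :
    IsSemisimpleModule A (moduleSocle A M) := by
  rw [moduleSocle, sSup_eq_iSup]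
  exact isSemisimpleModule_biSup_of_isSemisimpleModule_submodule
    (fun W (hW : IsSimpleModule A W) => inferInstance)

theorem layer_semisimple (R : Type u) [Ring R] (β : Ordinal.{u}) :
    IsSemisimpleModule Rᵐᵒᵖ (Layer R β) := by
  have := moduleSocle_semisimple Rᵐᵒᵖ (R ⧸ socleSeq R β)
  let j : socleSeq R (β + 1) →ₗ[Rᵐᵒᵖ] moduleSocle Rᵐᵒᵖ (R ⧸ socleSeq R β) :=
    LinearMap.codRestrict _ ((socleSeq R β).mkQ ∘ₗ (socleSeq R (β + 1)).subtype) (fun x => by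
      have := (socleSeq_succ R β).le x.2
      exact this)
  have hj : layerKer R β = LinearMap.ker j := by
    ext x
    rw [LinearMap.mem_ker, ← Submodule.coe_eq_zero]
    exact (Submodule.Quotient.mk_eq_zero (socleSeq R β)).symm
  exact IsSemisimpleModule.of_injective ((layerKer R β).liftQ j hj.le)
    (LinearMap.ker_eq_bot.1 (Submodule.ker_liftQ_eq_bot _ _ _ hj.ge))

theorem main_lift (R : Type u) [Ring R] (σ : Ordinal.{u})
    (M : Type u) [AddCommGroup M] [Module Rᵐᵒᵖ M] [Module.Finite Rᵐᵒᵖ M]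
    (hM : WeaklyRProjective R σ M) (α : Ordinal.{u}) :
    α ≤ σ + 1 → ∀ (N : Type u) [AddCommGroup N] [Module Rᵐᵒᵖ N] (φ : R →ₗ[Rᵐᵒᵖ] N)
      (f : M →ₗ[Rᵐᵒᵖ] N), LinearMap.range f ≤ (socleSeq R α).map φ →
      ∃ g : M →ₗ[Rᵐᵒᵖ] R, φ ∘ₗ g = f := by
  induction α using Ordinal.limitRecOn with
  | zero =>
    intro _ N _ _ φ f hf
    rw [socleSeq_zero, Submodule.map_bot, le_bot_iff, LinearMap.range_eq_bot] at hf
    exact ⟨0, by simp [hf]⟩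
  | add_one β ih =>
    intro hβ N _ _ φ f hf
    have hβσ : β ≤ σ := by simpa using hβ
    have lift : ∀ h : M →ₗ[Rᵐᵒᵖ] Layer R β,
        ∃ g : M →ₗ[Rᵐᵒᵖ] ↥(socleSeq R (β + 1)), (layerKer R β).mkQ ∘ₗ g = h := by
      intro h
      rcases eq_or_ne β 0 with rfl | h0
      · have hb : layerKer R 0 = ⊥ := by
          rw [layerKer, socleSeq_zero, ← LinearMap.ker, Submodule.ker_subtype]
        let e := LinearEquiv.ofBijective (layerKer R 0).mkQ
          ⟨by rw [← LinearMap.ker_eq_bot, Submodule.ker_mkQ, hb], Submodule.mkQ_surjective _⟩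
        refine ⟨e.symm.toLinearMap ∘ₗ h, ?_⟩
        ext m
        exact e.apply_symm_apply (h m)
      · exact hM β (pos_iff_ne_zero.2 h0) hβσ h (by
          rw [LinearMap.range_eq_map]; exact Module.Finite.fg_top.map _)
    let K : Submodule Rᵐᵒᵖ N := (socleSeq R β).map φ
    let q : Layer R β →ₗ[Rᵐᵒᵖ] N ⧸ K := (layerKer R β).liftQ
      (K.mkQ ∘ₗ φ ∘ₗ (socleSeq R (β + 1)).subtype) (by
        intro x hx
        simp only [LinearMap.mem_ker, LinearMap.comp_apply, Submodule.mkQ_apply,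
          Submodule.Quotient.mk_eq_zero]
        exact ⟨x, hx, rfl⟩)
    have hr : ∀ m, K.mkQ (f m) ∈ LinearMap.range q := by
      intro m
      obtain ⟨x, hx, hxm⟩ := hf ⟨m, rfl⟩
      exact ⟨(layerKer R β).mkQ ⟨x, hx⟩, by rw [← hxm]; rfl⟩
    have := layer_semisimple R β
    obtain ⟨s, hs⟩ := IsSemisimpleModule.lifting_property q.rangeRestrict
      q.surjective_rangeRestrict (LinearMap.codRestrict (LinearMap.range q) (K.mkQ ∘ₗ f) hr)
    obtain ⟨g, hg⟩ := lift s
    obtain ⟨g', hg'⟩ := ih (hβσ.trans (by simp)) N φ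
      (f - φ ∘ₗ (socleSeq R (β + 1)).subtype ∘ₗ g) (by
        rintro _ ⟨m, rfl⟩
        have h1 : q (s m) = K.mkQ (f m) := congrArg Subtype.val (LinearMap.congr_fun hs m)
        rw [← hg] at h1
        have h2 : K.mkQ (φ (g m)) = K.mkQ (f m) := h1
        exact (Submodule.Quotient.eq K).1 h2.symm)
    refine ⟨g' + (socleSeq R (β + 1)).subtype ∘ₗ g, ?_⟩
    rw [LinearMap.comp_add, hg']
    abel
  | limit o ho ih =>
    intro hoσ N _ _ φ f hf
    have hc : IsCompactElement (LinearMap.range f) := by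
      rw [← Submodule.fg_iff_compact, LinearMap.range_eq_map]
      exact Module.Finite.fg_top.map _
    have hle : LinearMap.range f ≤ ⨆ β : Set.Iio o, (socleSeq R β.1).map φ := by
      refine hf.trans ?_
      rw [socleSeq_limit R o ho, ← Submodule.map_iSup, iSup_subtype]
      rfl
    obtain ⟨t, ht⟩ := CompleteLattice.IsCompactElement.exists_finset_of_le_iSup _ hc _ hle
    have hγ : t.sup Subtype.val < o :=
      (Finset.sup_lt_iff ho.bot_lt).2 (fun b _ => b.2)
    refine ih _ hγ (hγ.le.trans hoσ) N φ f (ht.trans ?_)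
    exact iSup₂_le fun b hb => Submodule.map_mono (socleSeq_mono R _ _ (Finset.le_sup hb))

/-- Corollary 6 of the paper: over a right semiartinian ring,
every finitely generated weakly `R`-projective module is projective. -/
theorem projective_of_fg_weaklyRProjective (R : Type u) [Ring R]
    (hsa : IsRightSemiartinian R)
    (σ : Ordinal.{u}) (hσ : IsLeast {o : Ordinal.{u} | socleSeq R o = ⊤} (σ + 1))
    (M : Type u) [AddCommGroup M] [Module Rᵐᵒᵖ M] [Module.Finite Rᵐᵒᵖ M]
    (hM : WeaklyRProjective R σ M) :
    Module.Projective Rᵐᵒᵖ M := by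
  have h : RelProj Rᵐᵒᵖ M R := by
    intro N _ _ φ f hf
    refine main_lift R σ M hM (σ + 1) le_rfl N φ f ?_
    rw [hσ.1, Submodule.map_top]
    exact hf
  let e : R ≃ₗ[Rᵐᵒᵖ] Rᵐᵒᵖ :=
    { MulOpposite.opAddEquiv with
      map_smul' := fun c r => rfl }
  exact (h.congr e).projective
end

section
/- Let R be a von Neumann regular right semiartinian ring whose right socle Soc(R) is countably generated. Then every right ideal of R that is projective as a right R-module is countably generated. -/
universe u

open Submodule Function

/-- Kaplansky-style closure: a countable subset of a projective module is contained in a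
countably generated direct summand. -/
theorem exists_countable_summand {A M : Type*} [Ring A] [AddCommGroup M] [Module A M]
    (hM : Module.Projective A M) (S₀ : Set M) (hS₀ : S₀.Countable) :
    ∃ T : Set M, T.Countable ∧ S₀ ⊆ T ∧ ∃ φ : M →ₗ[A] M,
      (∀ x, φ x ∈ Submodule.span A T) ∧ ∀ x ∈ Submodule.span A T, φ x = x := by
  classical
  obtain ⟨s, hs⟩ := hM.out
  let step : Set M → Set M := fun X => ⋃ t ∈ X, ((s t).support : Set M)
  let Tn : ℕ → Set M := fun n => step^[n] S₀
  have hTn : ∀ n, (Tn n).Countable := by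
    intro n
    induction n with
    | zero => exact hS₀
    | succ k ih =>
      have : Tn (k + 1) = step (Tn k) := Function.iterate_succ_apply' step k S₀
      rw [this]
      exact ih.biUnion fun t _ => (s t).support.countable_toSet
  let T : Set M := ⋃ n, Tn n
  have hT : ∀ t ∈ T, s t ∈ Finsupp.supported A A T := by
    intro t ht
    obtain ⟨n, hn⟩ := Set.mem_iUnion.1 ht
    rw [Finsupp.mem_supported]
    intro y hy
    refine Set.mem_iUnion.2 ⟨n + 1, ?_⟩
    have : Tn (n + 1) = step (Tn n) := Function.iterate_succ_apply' step n S₀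
    rw [this]
    exact Set.mem_biUnion hn hy
  have hspan : ∀ x ∈ Submodule.span A T, s x ∈ Finsupp.supported A A T := by
    intro x hx
    have h : Submodule.span A T ≤ (Finsupp.supported A A T).comap s := Submodule.span_le.2 hT
    exact h hx
  refine ⟨T, Set.countable_iUnion hTn, Set.subset_iUnion Tn 0,
    Finsupp.linearCombination A id ∘ₗ (Finsupp.supported A A T).subtype ∘ₗ
      Finsupp.restrictDom A A T ∘ₗ s, ?_, ?_⟩
  · intro x
    have := (Finsupp.restrictDom A A T (s x)).2
    have h := Finsupp.mem_span_image_iff_linearCombination A (v := (id : M → M)) (s := T)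
      (x := Finsupp.linearCombination A id (Finsupp.restrictDom A A T (s x) : M →₀ A))
    rw [Set.image_id] at h
    exact h.2 ⟨_, this, rfl⟩
  · intro x hx
    have h := hspan x hx
    have h2 : ((Finsupp.restrictDom A A T (s x) : Finsupp.supported A A T) : M →₀ A) = s x := by
      rw [Finsupp.restrictDom_apply, Finsupp.filter_eq_self_iff]
      intro y hy
      exact h (Finsupp.mem_support_iff.2 hy)
    change Finsupp.linearCombination A id (Finsupp.restrictDom A A T (s x) : M →₀ A) = x
    rw [h2, hs x]

theorem isSimpleModule_map {A M N : Type*} [Ring A] [AddCommGroup M] [Module A M]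
    [AddCommGroup N] [Module A N] (f : M →ₗ[A] N) (hf : Function.Injective f)
    (W : Submodule A M) (hW : IsSimpleModule A W) : IsSimpleModule A (W.map f) :=
  IsSimpleModule.congr (Submodule.equivMapOfInjective f hf W).symm

theorem exists_simple_le (R : Type u) [Ring R] (hsa : IsRightSemiartinian R)
    (N : Submodule Rᵐᵒᵖ R) (hN : N ≠ ⊥) : ∃ W ≤ N, IsSimpleModule Rᵐᵒᵖ W := by
  obtain ⟨r, hr, hr0⟩ := N.exists_mem_ne_zero_of_ne_bot hN
  let f : R →ₗ[Rᵐᵒᵖ] R := LinearMap.mulLeft Rᵐᵒᵖ r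
  have hk : LinearMap.ker f ≠ ⊤ := by
    intro h
    have : (1 : R) ∈ LinearMap.ker f := h ▸ Submodule.mem_top
    apply hr0
    simpa [f] using this
  have h1 := hsa _ hk
  have : ∃ W : Submodule Rᵐᵒᵖ (R ⧸ LinearMap.ker f), IsSimpleModule Rᵐᵒᵖ W := by
    by_contra! hcon
    apply h1
    have he : {W : Submodule Rᵐᵒᵖ (R ⧸ LinearMap.ker f) | IsSimpleModule Rᵐᵒᵖ ↥W} = ∅ := by
      ext W
      simpa using hcon W
    rw [moduleSocle, he, sSup_empty]
  obtain ⟨W, hW⟩ := this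
  let g := (LinearMap.ker f).liftQ f le_rfl
  have hg : Function.Injective g := LinearMap.ker_eq_bot.1 (Submodule.ker_liftQ_eq_bot _ _ _ le_rfl)
  refine ⟨W.map g, ?_, isSimpleModule_map g hg W hW⟩
  rintro _ ⟨q, -, rfl⟩
  obtain ⟨x, rfl⟩ := Submodule.mkQ_surjective _ q
  have := N.smul_mem (MulOpposite.op x) hr
  simpa [g, f] using this

theorem exists_countable_span_inf_socle {A M : Type*} [Ring A] [AddCommGroup M] [Module A M]
    (hsoc : ∃ S : Set M, S.Countable ∧ Submodule.span A S = moduleSocle A M)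
    (I : Submodule A M) :
    ∃ S : Set I, S.Countable ∧
      ∀ W : Submodule A I, IsSimpleModule A W → W ≤ Submodule.span A S := by
  obtain ⟨S, hSc, hS⟩ := hsoc
  have hss : IsSemisimpleModule A (moduleSocle A M) := by
    rw [moduleSocle, sSup_eq_iSup]
    exact isSemisimpleModule_biSup_of_isSemisimpleModule_submodule fun W hW => by
      have : IsSimpleModule A W := hW
      infer_instance
  let K : Submodule A (moduleSocle A M) := I.comap (moduleSocle A M).subtype
  obtain ⟨C, hC⟩ := exists_isCompl K
  let ρ : moduleSocle A M →ₗ[A] K := K.projectionOnto C hC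
  let j : K →ₗ[A] I := ((moduleSocle A M).subtype ∘ₗ K.subtype).codRestrict I fun x => x.2
  let S' : Set (moduleSocle A M) := Subtype.val ⁻¹' S
  have hS' : Submodule.span A S' = ⊤ := by
    apply Submodule.map_injective_of_injective (moduleSocle A M).injective_subtype
    rw [Submodule.map_span, Submodule.map_top, Submodule.range_subtype]
    refine Eq.trans ?_ hS
    congr 1
    ext x
    simp only [S', Submodule.subtype_apply, Set.mem_image, Set.mem_preimage]
    constructor
    · rintro ⟨y, hy, rfl⟩
      exact hy
    · intro hx
      exact ⟨⟨x, hS ▸ Submodule.subset_span hx⟩, hx, rfl⟩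
  refine ⟨(j ∘ₗ ρ) '' S', (hSc.preimage Subtype.val_injective).image _, ?_⟩
  intro W hW
  rw [← Submodule.map_span, hS']
  intro w hw
  have hwS : (w : M) ∈ moduleSocle A M := by
    have h1 : IsSimpleModule A (W.map I.subtype) := isSimpleModule_map _ I.injective_subtype W hW
    exact (le_sSup h1 : W.map I.subtype ≤ moduleSocle A M) ⟨w, hw, rfl⟩
  let k : K := ⟨⟨w, hwS⟩, w.2⟩
  refine ⟨(k : moduleSocle A M), Submodule.mem_top, ?_⟩
  have : ρ k = k := Submodule.projectionOnto_apply_left hC k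
  rw [LinearMap.comp_apply, this]
  rfl

/-- key step in the proof of Lemma 9: over a von Neumann regular right
semiartinian ring with countably generated socle, every projective right ideal is
countably generated. -/
theorem projective_ideal_countably_generated (R : Type u) [Ring R]
    (hvnr : IsVNRegular R) (hsa : IsRightSemiartinian R)
    (hsoc : ∃ S : Set R, S.Countable ∧ Submodule.span Rᵐᵒᵖ S = moduleSocle Rᵐᵒᵖ R)
    (I : Submodule Rᵐᵒᵖ R) (hI : Module.Projective Rᵐᵒᵖ ↥I) :
    ∃ S : Set R, S.Countable ∧ Submodule.span Rᵐᵒᵖ S = I := by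
  obtain ⟨S₀, hS₀, hW₀⟩ := exists_countable_span_inf_socle hsoc I
  obtain ⟨T, hTc, hST, φ, hφ1, hφ2⟩ := exists_countable_summand hI S₀ hS₀
  let θ : I →ₗ[Rᵐᵒᵖ] I := LinearMap.id - φ
  have hθ : LinearMap.range θ = ⊥ := by
    by_contra hne
    have hne' : (LinearMap.range θ).map I.subtype ≠ ⊥ := by
      intro h
      exact hne (Submodule.map_injective_of_injective I.injective_subtype (by rw [h, Submodule.map_bot]))
    obtain ⟨W, hWle, hWs⟩ := exists_simple_le R hsa _ hne'
    have hWI : W ≤ I := hWle.trans (Submodule.map_subtype_le _ _)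
    let W' : Submodule Rᵐᵒᵖ I := W.comap I.subtype
    have hW's : IsSimpleModule Rᵐᵒᵖ W' :=
      IsSimpleModule.congr (Submodule.comapSubtypeEquivOfLe hWI)
    have hWT : W' ≤ Submodule.span Rᵐᵒᵖ T := (hW₀ W' hW's).trans (Submodule.span_mono hST)
    have hbot : W' = ⊥ := by
      rw [Submodule.eq_bot_iff]
      intro w hw
      have h1 : φ w = w := hφ2 w (hWT hw)
      obtain ⟨v, ⟨y, hy⟩, hv⟩ := hWle hw
      have hvw : v = w := Subtype.ext hv
      have h2 : w = y - φ y := by rw [← hvw, ← hy]; rfl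
      have h3 : φ (φ y) = φ y := hφ2 _ (hφ1 y)
      rw [← h1, h2, map_sub, h3, sub_self]
    have := (isSimpleModule_iff_isAtom.1 hW's).1
    exact this hbot
  refine ⟨Subtype.val '' T, hTc.image _, ?_⟩
  have htop : Submodule.span Rᵐᵒᵖ T = ⊤ := by
    rw [eq_top_iff]
    intro x _
    have h0 : θ x = 0 := by
      have : θ x ∈ LinearMap.range θ := ⟨x, rfl⟩
      rw [hθ] at this
      exact this
    have : x = φ x := sub_eq_zero.1 h0
    rw [this]
    exact hφ1 x
  have := Submodule.map_span I.subtype T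
  rw [htop, Submodule.map_top, Submodule.range_subtype] at this
  exact this.symm
end
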